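/- arXiv:1403.1441 — 2 statements merged into one kernel-verified Lean document; each statement's English description precedes it below -/
import Mathlib

section
/- Let μ be a full Borel probability measure on ℝ^d and let J ∈ D(μ) be a nonzero idempotent matrix such that there is no nonzero idempotent L ∈ D(μ) with L ≠ J satisfying JL = LJ = L. If T ∈ D(μ) satisfies JT = TJ = T and 0 < det_J T < 1, then T^k → 0 (the zero matrix) as k → ∞. -/
open MeasureTheory Filter Topology Matrix

/-- Convolution of two Borel measures on `ℝ^d`. -/
noncomputable def mconv {d : ℕ} (μ ν : Measure (Fin d → ℝ)) : Measure (Fin d → ℝ) :=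
  (μ.prod ν).map (fun p => p.1 + p.2)

/-- The Urbanik decomposability semigroup `D(μ)`: all matrices `A` such that
`μ = (A_*μ) ∗ ν` for some probability measure `ν`. -/
def UrbanikD {d : ℕ} (μ : Measure (Fin d → ℝ)) : Set (Matrix (Fin d) (Fin d) ℝ) :=
  {A | ∃ ν : Measure (Fin d → ℝ), IsProbabilityMeasure ν ∧ μ = mconv (μ.map A.mulVec) ν}

/-- A measure on `ℝ^d` is full if its support is not contained in any hyperplane,
i.e. no translate `v + L` of a proper linear subspace `L` carries all of its mass. -/
def IsFull {d : ℕ} (μ : Measure (Fin d → ℝ)) : Prop :=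
  ∀ (v : Fin d → ℝ) (L : Submodule ℝ (Fin d → ℝ)), L ≠ ⊤ → μ {x | x - v ∈ L} < 1

/-- Weak convergence of a sequence of measures on `ℝ^d`. -/
def WeakLim {d : ℕ} (μs : ℕ → Measure (Fin d → ℝ)) (μ : Measure (Fin d → ℝ)) : Prop :=
  ∀ f : BoundedContinuousFunction (Fin d → ℝ) ℝ,
    Tendsto (fun n => ∫ x, f x ∂(μs n)) atTop (𝓝 (∫ x, f x ∂μ))

/-- Partial sums `S_n = X_1 + ... + X_n`. -/
def partialSum {Ω : Type*} {d : ℕ} (X : ℕ → Ω → (Fin d → ℝ)) (n : ℕ) (ω : Ω) :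
    Fin d → ℝ :=
  ∑ j ∈ Finset.Icc 1 n, X j ω

/-- The triangular array `(A_n X_j : 1 ≤ j ≤ n, n ≥ 1)` is infinitesimal:
`sup_{1 ≤ j ≤ n} P(‖A_n X_j‖ ≥ ε) → 0` as `n → ∞`, for every `ε > 0`. -/
def Infinitesimal {Ω : Type*} [MeasurableSpace Ω] {d : ℕ} (P : Measure Ω)
    (A : ℕ → Matrix (Fin d) (Fin d) ℝ) (X : ℕ → Ω → (Fin d → ℝ)) : Prop :=
  ∀ ε > (0 : ℝ), ∀ δ > (0 : ℝ), ∃ N : ℕ, ∀ n ≥ N, ∀ j : ℕ, 1 ≤ j → j ≤ n →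
    (P {ω | ε ≤ ‖(A n).mulVec (X j ω)‖}).toReal < δ

/-- `det_J A`: the determinant of the restriction of `J A J` to the subspace
`J(ℝ^d)` (the range of `J`), which `J A J` maps into itself. -/
noncomputable def detJ {d : ℕ} (J A : Matrix (Fin d) (Fin d) ℝ) : ℝ :=
  LinearMap.det ((J * A * J).mulVecLin.restrict
    (p := LinearMap.range J.mulVecLin) (q := LinearMap.range J.mulVecLin)
    (fun x _ => ⟨(A * J).mulVecLin x, by
      simp [← Matrix.mulVecLin_mul, ← Matrix.mul_assoc]⟩))

namespace UrbanikD

open BoundedContinuousFunction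
open scoped Pointwise

variable {d : ℕ}

/-- The characteristic function of a measure on `ℝ^d`, with respect to the dot product. -/
noncomputable def cf (μ : Measure (Fin d → ℝ)) (t : Fin d → ℝ) : ℂ :=
  ∫ x, Complex.exp ((t ⬝ᵥ x : ℝ) * Complex.I) ∂μ

/-- The functional `x ↦ t ⬝ᵥ x`. -/
noncomputable def dotCLM (t : Fin d → ℝ) : StrongDual ℝ (Fin d → ℝ) :=
  (dotProductBilin ℝ ℝ t).toContinuousLinearMap

lemma dotCLM_apply (t x : Fin d → ℝ) : dotCLM t x = t ⬝ᵥ x := rfl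

lemma exists_dotCLM_eq (L : StrongDual ℝ (Fin d → ℝ)) : ∃ t, dotCLM t = L := by
  refine ⟨fun i => L (Pi.single i 1), ?_⟩
  ext x
  rw [dotCLM_apply]
  conv_rhs => rw [pi_eq_sum_univ' x, map_sum]
  simp [dotProduct, mul_comm]

lemma cf_eq_charFunDual (μ : Measure (Fin d → ℝ)) (t : Fin d → ℝ) :
    cf μ t = charFunDual μ (dotCLM t) := rfl

lemma ext_of_cf {μ ν : Measure (Fin d → ℝ)} [IsFiniteMeasure μ] [IsFiniteMeasure ν]
    (h : ∀ t, cf μ t = cf ν t) : μ = ν := by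
  refine Measure.ext_of_charFunDual (funext fun L => ?_)
  obtain ⟨t, rfl⟩ := exists_dotCLM_eq L
  exact h t

lemma cf_mconv (μ ν : Measure (Fin d → ℝ)) [IsFiniteMeasure μ] [IsFiniteMeasure ν]
    (t : Fin d → ℝ) : cf (mconv μ ν) t = cf μ t * cf ν t :=
  charFunDual_conv (μ := μ) (ν := ν) (dotCLM t)

lemma measurable_mulVec (A : Matrix (Fin d) (Fin d) ℝ) : Measurable A.mulVec :=
  (continuous_const.matrix_mulVec continuous_id).measurable

lemma cf_map_mulVec (μ : Measure (Fin d → ℝ)) (A : Matrix (Fin d) (Fin d) ℝ) (t : Fin d → ℝ) :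
    cf (μ.map A.mulVec) t = cf μ (t ᵥ* A) := by
  rw [cf, integral_map (measurable_mulVec A).aemeasurable
    (by apply Continuous.aestronglyMeasurable; fun_prop), cf]
  simp_rw [dotProduct_mulVec]

instance isProbabilityMeasure_map_mulVec (μ : Measure (Fin d → ℝ)) [IsProbabilityMeasure μ]
    (A : Matrix (Fin d) (Fin d) ℝ) : IsProbabilityMeasure (μ.map A.mulVec) :=
  Measure.isProbabilityMeasure_map (measurable_mulVec A).aemeasurable

instance isProbabilityMeasure_mconv (μ ν : Measure (Fin d → ℝ)) [IsProbabilityMeasure μ]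
    [IsProbabilityMeasure ν] : IsProbabilityMeasure (mconv μ ν) :=
  Measure.isProbabilityMeasure_map (by fun_prop)

lemma norm_cf_le_one (μ : Measure (Fin d → ℝ)) [IsProbabilityMeasure μ] (t : Fin d → ℝ) :
    ‖cf μ t‖ ≤ 1 := by
  rw [cf_eq_charFunDual]
  refine (norm_integral_le_of_norm_le_const (C := 1) (ae_of_all _ fun x => ?_)).trans (by simp)
  exact (Complex.norm_exp_ofReal_mul_I _).le

lemma cf_zero (μ : Measure (Fin d → ℝ)) [IsProbabilityMeasure μ] : cf μ 0 = 1 := by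
  simp [cf]

lemma continuous_cf (μ : Measure (Fin d → ℝ)) [IsProbabilityMeasure μ] : Continuous (cf μ) := by
  refine continuous_of_dominated (bound := fun _ => 1) (fun t => ?_) (fun t => ?_) (by simp) ?_
  · apply Continuous.aestronglyMeasurable; fun_prop
  · exact ae_of_all _ fun x => (Complex.norm_exp_ofReal_mul_I _).le
  · exact ae_of_all _ fun x => by fun_prop

lemma continuous_cf_measure (t : Fin d → ℝ) :
    Continuous fun ν : ProbabilityMeasure (Fin d → ℝ) => cf (ν : Measure (Fin d → ℝ)) t := by
  rw [continuous_iff_continuousAt]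
  intro ν
  have h := (ProbabilityMeasure.tendsto_iff_forall_integral_rclike_tendsto ℂ).1
    (tendsto_id (x := 𝓝 ν))
  exact h (ofNormedAddCommGroup (fun x => Complex.exp ((t ⬝ᵥ x : ℝ) * Complex.I))
    (by fun_prop) 1 fun x => (Complex.norm_exp_ofReal_mul_I _).le)

lemma eq_mconv_iff (μ ν : Measure (Fin d → ℝ)) [IsProbabilityMeasure μ] [IsProbabilityMeasure ν]
    (A : Matrix (Fin d) (Fin d) ℝ) :
    μ = mconv (μ.map A.mulVec) ν ↔ ∀ t, cf μ t = cf μ (t ᵥ* A) * cf ν t := by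
  simp_rw [← cf_map_mulVec, ← cf_mconv]
  exact ⟨fun h t => by rw [← h], ext_of_cf⟩

lemma mul_mem {μ : Measure (Fin d → ℝ)} [IsProbabilityMeasure μ]
    {A B : Matrix (Fin d) (Fin d) ℝ} (hA : A ∈ UrbanikD μ) (hB : B ∈ UrbanikD μ) :
    A * B ∈ UrbanikD μ := by
  obtain ⟨ν, hν, hA⟩ := hA
  obtain ⟨ρ, hρ, hB⟩ := hB
  refine ⟨mconv (ρ.map A.mulVec) ν, inferInstance, ?_⟩
  rw [eq_mconv_iff] at *
  intro t
  rw [cf_mconv, cf_map_mulVec, hA, hB, vecMul_vecMul, mul_assoc]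

lemma norm_cf_le {μ : Measure (Fin d → ℝ)} [IsProbabilityMeasure μ]
    {A : Matrix (Fin d) (Fin d) ℝ} (hA : A ∈ UrbanikD μ) (t : Fin d → ℝ) :
    ‖cf μ t‖ ≤ ‖cf μ (t ᵥ* A)‖ := by
  obtain ⟨ν, hν, hA⟩ := hA
  rw [(eq_mconv_iff _ _ _).1 hA t, norm_mul]
  exact mul_le_of_le_one_right (norm_nonneg _) (norm_cf_le_one ν t)

/-- If the characteristic function has modulus one along a line, the corresponding marginal is
degenerate. -/
lemma exists_ae_dotProduct_eq {μ : Measure (Fin d → ℝ)} [IsProbabilityMeasure μ]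
    {u : Fin d → ℝ} (h : ∀ r : ℝ, ‖cf μ (r • u)‖ = 1) :
    ∃ v, ∀ᵐ x ∂μ, u ⬝ᵥ x = u ⬝ᵥ v := by
  have hm : Measurable fun p : (Fin d → ℝ) × (Fin d → ℝ) => u ⬝ᵥ p.1 - u ⬝ᵥ p.2 := by
    apply Continuous.measurable; fun_prop
  have hP := Measure.isProbabilityMeasure_map (μ := μ.prod μ) hm.aemeasurable
  have key : (μ.prod μ).map (fun p => u ⬝ᵥ p.1 - u ⬝ᵥ p.2) = Measure.dirac 0 := by
    refine Measure.ext_of_charFun (funext fun r => ?_)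
    rw [charFun_dirac, charFun_apply_real, integral_map hm.aemeasurable
      (by apply Continuous.aestronglyMeasurable; fun_prop)]
    have hsplit (p : (Fin d → ℝ) × (Fin d → ℝ)) :
        Complex.exp (r * ((u ⬝ᵥ p.1 - u ⬝ᵥ p.2 : ℝ) : ℂ) * Complex.I) =
          Complex.exp (((r • u) ⬝ᵥ p.1 : ℝ) * Complex.I) *
            (starRingEnd ℂ) (Complex.exp (((r • u) ⬝ᵥ p.2 : ℝ) * Complex.I)) := by
      rw [← Complex.exp_conj, ← Complex.exp_add]
      congr 1
      simp only [smul_dotProduct, smul_eq_mul, map_mul, Complex.conj_ofReal, Complex.conj_I]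
      push_cast
      ring
    simp_rw [hsplit]
    rw [integral_prod_mul (fun x => Complex.exp (((r • u) ⬝ᵥ x : ℝ) * Complex.I))
      (fun x => (starRingEnd ℂ) (Complex.exp (((r • u) ⬝ᵥ x : ℝ) * Complex.I))), integral_conj]
    change cf μ (r • u) * (starRingEnd ℂ) (cf μ (r • u)) = _
    rw [Complex.mul_conj, Complex.normSq_eq_norm_sq, h]
    simp
  have hae : ∀ᵐ p ∂(μ.prod μ), u ⬝ᵥ p.1 - u ⬝ᵥ p.2 = 0 := by
    refine ae_of_ae_map (p := fun z : ℝ => z = 0) hm.aemeasurable ?_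
    rw [key]
    simp [ae_dirac_eq]
  obtain ⟨v, hv⟩ := (Measure.ae_ae_of_ae_prod hae).exists
  exact ⟨v, hv.mono fun x hx => by linarith⟩

lemma eq_zero_of_norm_cf_eq_one {μ : Measure (Fin d → ℝ)} [IsProbabilityMeasure μ]
    (hfull : IsFull μ) {u : Fin d → ℝ} (h : ∀ r : ℝ, ‖cf μ (r • u)‖ = 1) : u = 0 := by
  by_contra hu
  obtain ⟨v, hv⟩ := exists_ae_dotProduct_eq h
  refine (hfull v (LinearMap.ker (dotProductBilin ℝ ℝ u)) ?_).ne ?_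
  · intro htop
    have : u ∈ LinearMap.ker (dotProductBilin ℝ ℝ u) := htop ▸ Submodule.mem_top
    exact hu (dotProduct_self_eq_zero.1 this)
  · have hs : {x | x - v ∈ LinearMap.ker (dotProductBilin ℝ ℝ u)} =ᵐ[μ] Set.univ := by
      refine eventuallyEq_univ.2 (hv.mono fun x hx => ?_)
      change u ⬝ᵥ (x - v) = 0
      rw [dotProduct_sub, hx, sub_self]
    rw [measure_congr hs, measure_univ]

/-- The rows of the matrices in `D(μ)` are uniformly bounded when `μ` is full. -/
lemma exists_norm_row_le {μ : Measure (Fin d → ℝ)} [IsProbabilityMeasure μ] (hfull : IsFull μ) :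
    ∃ M : ℝ, ∀ A ∈ UrbanikD μ, ∀ i, ‖A i‖ ≤ M := by
  by_contra! hcon
  choose A hA i hi using fun n : ℕ => hcon n
  have hc : Tendsto (fun n => ‖A n (i n)‖) atTop atTop :=
    tendsto_atTop_mono (fun n => (hi n).le) tendsto_natCast_atTop_atTop
  have hc0 (n : ℕ) : ‖A n (i n)‖ ≠ 0 := ((Nat.cast_nonneg n).trans_lt (hi n)).ne'
  have hsph (n : ℕ) : ‖A n (i n)‖⁻¹ • A n (i n) ∈ Metric.sphere (0 : Fin d → ℝ) 1 := by
    rw [mem_sphere_zero_iff_norm, norm_smul, norm_inv, norm_norm, inv_mul_cancel₀ (hc0 n)]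
  obtain ⟨u, hu, ψ, hψ, hlim⟩ := (isCompact_sphere (0 : Fin d → ℝ) 1).tendsto_subseq hsph
  have hu0 : u = 0 := by
    refine eq_zero_of_norm_cf_eq_one hfull fun r => (norm_cf_le_one μ _).antisymm ?_
    have hsmall : Tendsto (fun n => Pi.single (M := fun _ : Fin d => ℝ) (i (ψ n))
        (r * ‖A (ψ n) (i (ψ n))‖⁻¹)) atTop (𝓝 0) := by
      rw [tendsto_zero_iff_norm_tendsto_zero]
      simp only [Pi.norm_single]
      have := ((tendsto_inv_atTop_zero.comp (hc.comp hψ.tendsto_atTop)).const_mul r).norm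
      simpa using this
    have hle (n : ℕ) := norm_cf_le (hA (ψ n))
      (Pi.single (M := fun _ : Fin d => ℝ) (i (ψ n)) (r * ‖A (ψ n) (i (ψ n))‖⁻¹))
    have hl := (((continuous_cf μ).tendsto 0).comp hsmall).norm
    rw [cf_zero, norm_one] at hl
    refine le_of_tendsto_of_tendsto' hl
      (((continuous_cf μ).tendsto _).comp (hlim.const_smul r)).norm fun n => ?_
    refine (hle n).trans_eq ?_
    simp only [Function.comp_apply, single_vecMul, mul_smul]
    rfl
  rw [hu0] at hu
  simp at hu

/-- The cofactors of `μ` associated to a bounded set of matrices form a tight set. -/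
lemma isTightMeasureSet_cofactors (μ : Measure (Fin d → ℝ)) [IsProbabilityMeasure μ]
    {C : Set (Matrix (Fin d) (Fin d) ℝ)} (hC : IsCompact C) :
    IsTightMeasureSet {ν | IsProbabilityMeasure ν ∧ ∃ A ∈ C, μ = mconv (μ.map A.mulVec) ν} := by
  rw [isTightMeasureSet_iff_exists_isCompact_measure_compl_le]
  intro ε hε
  have hδ : 0 < min (ε / 2) 2⁻¹ := lt_min (ENNReal.half_pos hε.ne') (by simp)
  obtain ⟨K, hK, hμK⟩ := isTightMeasureSet_iff_exists_isCompact_measure_compl_le.1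
    (isTightMeasureSet_singleton (μ := μ)) _ hδ
  specialize hμK μ rfl
  set CK : Set (Fin d → ℝ) := (fun p : Matrix (Fin d) (Fin d) ℝ × (Fin d → ℝ) => p.1 *ᵥ p.2) ''
    (C ×ˢ K)
  have hCK : IsCompact CK :=
    (hC.prod hK).image (continuous_fst.matrix_mulVec continuous_snd)
  refine ⟨K - CK, sub_eq_add_neg K CK ▸ hK.add hCK.neg, ?_⟩
  rintro ν ⟨hν, A, hA, heq⟩
  have hhalf : 2⁻¹ ≤ μ.map A.mulVec CK := by
    rw [Measure.map_apply (measurable_mulVec A) hCK.measurableSet]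
    have h1 : μ K ≤ μ (A.mulVec ⁻¹' CK) :=
      measure_mono fun x hx => ⟨(A, x), ⟨hA, hx⟩, rfl⟩
    have h2 : μ K = 1 - μ Kᶜ := by
      rw [prob_compl_eq_one_sub hK.measurableSet, ENNReal.sub_sub_cancel (by simp) prob_le_one]
    refine le_trans ?_ h1
    rw [h2, ← ENNReal.one_sub_inv_two]
    exact tsub_le_tsub_left (hμK.trans (min_le_right _ _)) _
  have hprod : μ.map A.mulVec CK * ν (K - CK)ᶜ ≤ μ Kᶜ := by
    conv_rhs => rw [heq]
    rw [mconv, Measure.map_apply (by fun_prop) hK.measurableSet.compl, ← Measure.prod_prod]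
    refine measure_mono ?_
    rintro ⟨x, y⟩ ⟨hx, hy⟩ hxy
    exact hy ⟨x + y, hxy, x, hx, by simp⟩
  have : 2⁻¹ * ν (K - CK)ᶜ ≤ 2⁻¹ * ε := by
    calc 2⁻¹ * ν (K - CK)ᶜ ≤ μ.map A.mulVec CK * ν (K - CK)ᶜ := by gcongr
      _ ≤ μ Kᶜ := hprod
      _ ≤ ε / 2 := hμK.trans (min_le_left _ _)
      _ = 2⁻¹ * ε := by rw [ENNReal.div_eq_inv_mul]
  exact (ENNReal.mul_le_mul_iff_right (by simp) (by simp)).1 this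

/-- The decomposability semigroup of a full probability measure is compact. -/
theorem isCompact {μ : Measure (Fin d → ℝ)} [IsProbabilityMeasure μ] (hfull : IsFull μ) :
    IsCompact (UrbanikD μ) := by
  obtain ⟨M, hM⟩ := exists_norm_row_le hfull
  let C : Set (Matrix (Fin d) (Fin d) ℝ) := Set.univ.pi fun _ => Metric.closedBall 0 M
  have hC : IsCompact C := isCompact_univ_pi fun _ => isCompact_closedBall _ _
  let S : Set (ProbabilityMeasure (Fin d → ℝ)) :=
    {ν | ∃ A ∈ C, μ = mconv (μ.map A.mulVec) (ν : Measure (Fin d → ℝ))}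
  have hS : IsCompact (closure S) := by
    refine isCompact_closure_of_isTightMeasureSet ((isTightMeasureSet_cofactors μ hC).subset ?_)
    rintro _ ⟨ν, hν, rfl⟩
    exact ⟨inferInstance, hν⟩
  let E : Set (Matrix (Fin d) (Fin d) ℝ × ProbabilityMeasure (Fin d → ℝ)) :=
    {p | ∀ t, cf μ t = cf μ (t ᵥ* p.1) * cf (p.2 : Measure (Fin d → ℝ)) t}
  have hE : IsClosed E := by
    simp only [E, Set.ofPred_forall]
    refine isClosed_iInter fun t => isClosed_eq continuous_const ?_
    exact ((continuous_cf μ).comp (continuous_const.matrix_vecMul continuous_fst)).mul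
      ((continuous_cf_measure t).comp continuous_snd)
  convert ((hC.prod hS).inter_right hE).image continuous_fst
  ext A
  constructor
  · rintro ⟨ν, hν, hA⟩
    have hAC : A ∈ C := fun i _ => mem_closedBall_zero_iff.2 (hM A ⟨ν, hν, hA⟩ i)
    exact ⟨(A, ⟨ν, hν⟩), ⟨⟨hAC, subset_closure ⟨A, hAC, hA⟩⟩, (eq_mconv_iff _ _ _).1 hA⟩, rfl⟩
  · rintro ⟨⟨B, ν⟩, ⟨-, hB⟩, rfl⟩
    exact ⟨ν, inferInstance, (eq_mconv_iff _ _ _).2 hB⟩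

/-- The linear map sending `A` to the restriction of `J A J` to the range of `J`. -/
noncomputable def compress (J : Matrix (Fin d) (Fin d) ℝ) :
    Matrix (Fin d) (Fin d) ℝ →ₗ[ℝ] Module.End ℝ (LinearMap.range J.mulVecLin) where
  toFun A := (J * A * J).mulVecLin.restrict
    (p := LinearMap.range J.mulVecLin) (q := LinearMap.range J.mulVecLin)
    fun x _ => ⟨(A * J).mulVecLin x, by simp [← Matrix.mul_assoc]⟩
  map_add' A B := by ext x : 2; simp [mul_add, add_mul]
  map_smul' c A := by ext x : 2; simp

lemma detJ_eq_det_compress (J A : Matrix (Fin d) (Fin d) ℝ) :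
    detJ J A = LinearMap.det (compress J A) := rfl

lemma continuous_detJ (J : Matrix (Fin d) (Fin d) ℝ) : Continuous (detJ J) := by
  let b := Module.finBasis ℝ (LinearMap.range J.mulVecLin)
  have h (A : Matrix (Fin d) (Fin d) ℝ) :
      detJ J A = (((LinearMap.toMatrix b b).toLinearMap ∘ₗ compress J) A).det := by
    rw [detJ_eq_det_compress, ← LinearMap.det_toMatrix b]
    rfl
  rw [funext h]
  exact (LinearMap.continuous_of_finiteDimensional _).matrix_det

lemma detJ_mul {J A B : Matrix (Fin d) (Fin d) ℝ} (hJ : J * J = J) (hB : J * B = B) :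
    detJ J (A * B) = detJ J A * detJ J B := by
  simp_rw [detJ_eq_det_compress, ← LinearMap.det_comp]
  congr 1
  ext x : 2
  have h : J * (A * B) * J = J * A * J * (J * B * J) := by
    simp only [mul_assoc]
    rw [← mul_assoc J J, hJ, ← mul_assoc J B, hB]
  change (J * (A * B) * J) *ᵥ _ = (J * A * J) *ᵥ ((J * B * J) *ᵥ _)
  rw [mulVec_mulVec, h]

lemma detJ_self {J : Matrix (Fin d) (Fin d) ℝ} (hJ : J * J = J) : detJ J J = 1 := by
  have h : compress J J = LinearMap.id := by
    ext ⟨_, y, rfl⟩ : 2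
    change (J * J * J) *ᵥ (J *ᵥ y) = J *ᵥ y
    rw [mulVec_mulVec, hJ, hJ, hJ]
  rw [detJ_eq_det_compress, h, LinearMap.det_id]

/-- If the powers of `T` stay in a compact set and accumulate at `0`, they converge to `0`. -/
lemma tendsto_pow_zero_of_mem_closure {T : Matrix (Fin d) (Fin d) ℝ}
    {K : Set (Matrix (Fin d) (Fin d) ℝ)} (hK : IsCompact K) (hT : ∀ k, T ^ (k + 1) ∈ K)
    (h0 : 0 ∈ closure (Set.range fun k : ℕ => T ^ (k + 1))) :
    Tendsto (fun k => T ^ k) atTop (𝓝 0) := by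
  intro U hU
  obtain ⟨W, hWU, hW, h0W⟩ := mem_nhds_iff.1 hU
  have hsub : ({0} : Set (Matrix (Fin d) (Fin d) ℝ)) ×ˢ K ⊆ (fun p => p.1 * p.2) ⁻¹' W := by
    rintro ⟨A, B⟩ ⟨rfl, -⟩
    simpa using h0W
  obtain ⟨V, V', hV, -, h0V, hKV', hVV'⟩ :=
    generalized_tube_lemma isCompact_singleton hK (hW.preimage continuous_mul) hsub
  obtain ⟨_, hm, m, rfl⟩ := mem_closure_iff.1 h0 V hV (h0V rfl)
  change ∀ᶠ k in atTop, T ^ k ∈ U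
  filter_upwards [eventually_ge_atTop (m + 2)] with k hk
  obtain ⟨j, rfl⟩ := Nat.exists_eq_add_of_le hk
  have : T ^ (m + 1) * T ^ (j + 1) ∈ W := @hVV' (_, _) ⟨hm, hKV' (hT j)⟩
  rw [← pow_add, show m + 1 + (j + 1) = m + 2 + j by ring] at this
  exact hWU this

end UrbanikD

/-- If `J ∈ D(μ)` is a nonzero primitive idempotent (μ full) and `T ∈ D(μ)` satisfies
`JT = TJ = T` and `0 < det_J T < 1`, then `T^k → 0` as `k → ∞`. -/
theorem pow_tendsto_zero_of_detJ_lt_one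
    {d : ℕ} (μ : Measure (Fin d → ℝ)) [IsProbabilityMeasure μ] (hfull : IsFull μ)
    (J : Matrix (Fin d) (Fin d) ℝ) (hJD : J ∈ UrbanikD μ) (hJ0 : J ≠ 0)
    (hJid : J * J = J)
    (hprim : ¬ ∃ L ∈ UrbanikD μ, L ≠ 0 ∧ L ≠ J ∧ L * L = L ∧ J * L = L ∧ L * J = L)
    (T : Matrix (Fin d) (Fin d) ℝ) (hTD : T ∈ UrbanikD μ)
    (hJT : J * T = T) (hTJ : T * J = T)
    (hdet0 : 0 < detJ J T) (hdet1 : detJ J T < 1) :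
    Filter.Tendsto (fun k => T ^ k) Filter.atTop (nhds 0) := by
  have hmem (k : ℕ) : T ^ (k + 1) ∈ UrbanikD μ ∩ {A | J * A = A ∧ A * J = A} ∩
      {A | |detJ J A| ≤ detJ J T} := by
    induction k with
    | zero => simp [hTD, hJT, hTJ, abs_of_pos hdet0]
    | succ k ih =>
      obtain ⟨⟨hD, hJk, hkJ⟩, hk⟩ := ih
      rw [pow_succ]
      refine ⟨⟨UrbanikD.mul_mem hD hTD, ?_, ?_⟩, ?_⟩
      · rw [← mul_assoc, hJk]
      · rw [mul_assoc, hTJ]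
      · rw [Set.mem_ofPred_eq, UrbanikD.detJ_mul hJid hJT, abs_mul, abs_of_pos hdet0]
        exact mul_le_of_le_one_left hdet0.le (hk.trans hdet1.le)
  have hcompact := UrbanikD.isCompact hfull
  have hclosed : IsClosed (UrbanikD μ ∩ {A | J * A = A ∧ A * J = A} ∩
      {A | |detJ J A| ≤ detJ J T}) :=
    (hcompact.isClosed.inter ((isClosed_eq (continuous_const.mul continuous_id) continuous_id).inter
      (isClosed_eq (continuous_id.mul continuous_const) continuous_id))).inter
      (isClosed_le (UrbanikD.continuous_detJ J).abs continuous_const)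
  have hsub := closure_minimal (Set.range_subset_iff.2 hmem) hclosed
  obtain ⟨L, hL, hLid⟩ := exists_idempotent_in_compact_subsemigroup
    (fun r : Matrix (Fin d) (Fin d) ℝ => continuous_id.mul continuous_const)
    (closure (Set.range fun k : ℕ => T ^ (k + 1))) (Set.range_nonempty _).closure
    (hcompact.of_isClosed_subset isClosed_closure fun A hA => (hsub hA).1.1)
    fun A hA B hB => map_mem_closure₂ continuous_mul hA hB (by
      rintro _ ⟨m, rfl⟩ _ ⟨n, rfl⟩
      exact ⟨m + 1 + n, by rw [← pow_add]; congr 1⟩)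
  obtain ⟨⟨hLD, hJL, hLJ⟩, hLdet⟩ := hsub hL
  have hL0 : L = 0 := by
    by_contra hne
    refine hprim ⟨L, hLD, hne, ?_, hLid, hJL, hLJ⟩
    rintro rfl
    rw [Set.mem_ofPred_eq, UrbanikD.detJ_self hJid, abs_one] at hLdet
    exact absurd hdet1 hLdet.not_gt
  exact UrbanikD.tendsto_pow_zero_of_mem_closure hcompact (fun k => (hmem k).1.1) (hL0 ▸ hL)
end

section
/- Let μ be a full Borel probability measure on ℝ^d, let W denote the set of nonnegative rational numbers, and let (C_w)_{w∈W} ⊆ D(μ) be invertible matrices with C_0 = I, C_{w+u} = C_w C_u for all w, u ∈ W, and det C_w = e^{−qw} for some positive integer q. Let S be the closure of {C_w : w ∈ W} in the space of d×d real matrices. Then for every A ∈ S: A ∈ A(μ) if and only if det A = 1; in other words, the kernel of the homomorphism A ↦ log det A on S equals S ∩ A(μ). -/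
open MeasureTheory Filter Topology Matrix

/-- The symmetry semigroup `A(μ)`: matrices `A` with `μ = (A_*μ) ∗ δ_a` for some `a`. -/
def SymmA {d : ℕ} (μ : Measure (Fin d → ℝ)) : Set (Matrix (Fin d) (Fin d) ℝ) :=
  {A | ∃ a : Fin d → ℝ, μ = μ.map (fun x => A.mulVec x + a)}

/-- The characteristic function of a measure on `ℝ^d`, in coordinates. -/
noncomputable def coordCharFun {d : ℕ} (μ : Measure (Fin d → ℝ)) (t : Fin d → ℝ) : ℂ :=
  ∫ x, Complex.exp (((t ⬝ᵥ x : ℝ) : ℂ) * Complex.I) ∂μ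

section CharFun

variable {d : ℕ}

lemma continuous_dotProduct_right (t : Fin d → ℝ) : Continuous fun x : Fin d → ℝ => t ⬝ᵥ x := by
  unfold dotProduct; fun_prop

lemma continuous_dotProduct_left (x : Fin d → ℝ) : Continuous fun t : Fin d → ℝ => t ⬝ᵥ x := by
  unfold dotProduct; fun_prop

lemma continuous_exp_dotProduct (t : Fin d → ℝ) :
    Continuous fun x : Fin d → ℝ => Complex.exp (((t ⬝ᵥ x : ℝ) : ℂ) * Complex.I) := by
  have := continuous_dotProduct_right t
  fun_prop

lemma integrable_exp_dotProduct (μ : Measure (Fin d → ℝ)) [IsFiniteMeasure μ] (t : Fin d → ℝ) :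
    Integrable (fun x => Complex.exp (((t ⬝ᵥ x : ℝ) : ℂ) * Complex.I)) μ :=
  (integrable_const (1 : ℝ)).mono (continuous_exp_dotProduct t).aestronglyMeasurable
    (by simp [Complex.norm_exp_ofReal_mul_I])

lemma norm_coordCharFun_le_one (μ : Measure (Fin d → ℝ)) [IsProbabilityMeasure μ]
    (t : Fin d → ℝ) : ‖coordCharFun μ t‖ ≤ 1 := by
  refine (norm_integral_le_integral_norm _).trans ?_
  simp [Complex.norm_exp_ofReal_mul_I]

lemma coordCharFun_zero (μ : Measure (Fin d → ℝ)) [IsProbabilityMeasure μ] :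
    coordCharFun μ 0 = 1 := by
  simp [coordCharFun]

lemma continuous_coordCharFun (μ : Measure (Fin d → ℝ)) [IsFiniteMeasure μ] :
    Continuous (coordCharFun μ) := by
  refine continuous_of_dominated (bound := fun _ => 1)
    (fun t => (continuous_exp_dotProduct t).aestronglyMeasurable)
    (fun t => by simp [Complex.norm_exp_ofReal_mul_I]) (integrable_const _)
    (.of_forall fun x => ?_)
  have := continuous_dotProduct_left x
  fun_prop

lemma ext_of_coordCharFun {μ ν : Measure (Fin d → ℝ)} [IsFiniteMeasure μ] [IsFiniteMeasure ν]
    (h : ∀ t, coordCharFun μ t = coordCharFun ν t) : μ = ν := by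
  refine Measure.ext_of_charFunDual (funext fun L => ?_)
  have hL (x : Fin d → ℝ) : L x = (fun i => L (Pi.single i 1)) ⬝ᵥ x := by
    conv_lhs => rw [← Finset.univ_sum_single x, map_sum]
    refine Finset.sum_congr rfl fun i _ => ?_
    rw [mul_comm, ← smul_eq_mul, ← map_smul, ← Pi.single_smul, smul_eq_mul, mul_one]
  have hμν := h fun i => L (Pi.single i 1)
  unfold coordCharFun at hμν
  simp only [← hL] at hμν
  exact hμν

instance isProbabilityMeasure_mconv (μ ν : Measure (Fin d → ℝ)) [IsProbabilityMeasure μ]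
    [IsProbabilityMeasure ν] : IsProbabilityMeasure (mconv μ ν) :=
  Measure.isProbabilityMeasure_map (by fun_prop)

lemma continuous_mulVec (A : Matrix (Fin d) (Fin d) ℝ) : Continuous A.mulVec :=
  Continuous.matrix_mulVec continuous_const continuous_id

lemma coordCharFun_mconv (μ ν : Measure (Fin d → ℝ)) [IsProbabilityMeasure μ]
    [IsProbabilityMeasure ν] (t : Fin d → ℝ) :
    coordCharFun (mconv μ ν) t = coordCharFun μ t * coordCharFun ν t := by
  have hm : mconv μ ν = Measure.conv μ ν := rfl
  unfold coordCharFun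
  rw [hm, integral_conv]
  · simp [add_mul, Complex.exp_add, dotProduct_add, integral_const_mul, integral_mul_const]
  · exact integrable_exp_dotProduct _ t

lemma coordCharFun_map_mulVec (μ : Measure (Fin d → ℝ)) (A : Matrix (Fin d) (Fin d) ℝ)
    (t : Fin d → ℝ) : coordCharFun (μ.map A.mulVec) t = coordCharFun μ (Aᵀ *ᵥ t) := by
  unfold coordCharFun
  rw [integral_map (continuous_mulVec A).aemeasurable
    (continuous_exp_dotProduct t).aestronglyMeasurable]
  simp only [dotProduct_mulVec, mulVec_transpose]

lemma coordCharFun_map_affine (μ : Measure (Fin d → ℝ)) (A : Matrix (Fin d) (Fin d) ℝ)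
    (a t : Fin d → ℝ) : coordCharFun (μ.map fun x => A *ᵥ x + a) t =
      coordCharFun μ (Aᵀ *ᵥ t) * Complex.exp (((t ⬝ᵥ a : ℝ) : ℂ) * Complex.I) := by
  unfold coordCharFun
  have hA : Continuous fun x => A *ᵥ x + a := (continuous_mulVec A).add continuous_const
  rw [integral_map hA.aemeasurable
    (continuous_exp_dotProduct t).aestronglyMeasurable, ← integral_mul_const]
  simp only [dotProduct_add, dotProduct_mulVec, mulVec_transpose, Complex.ofReal_add, add_mul,
    Complex.exp_add]

lemma ae_dotProduct_mem_of_norm_coordCharFun_eq_one (ν : Measure (Fin d → ℝ))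
    [IsProbabilityMeasure ν] {t : Fin d → ℝ} (h : ‖coordCharFun ν t‖ = 1) :
    ∃ θ : ℝ, ∀ᵐ x ∂ν, ∃ k : ℤ, t ⬝ᵥ x = θ + k * (2 * Real.pi) := by
  set θ := (coordCharFun ν t).arg
  have hz : coordCharFun ν t = Complex.exp (θ * Complex.I) := by
    simpa [h] using (Complex.norm_mul_exp_arg_mul_I (coordCharFun ν t)).symm
  have hint : ∫ x, Complex.exp (((t ⬝ᵥ x - θ : ℝ) : ℂ) * Complex.I) ∂ν = 1 := by
    have : ∀ x : Fin d → ℝ, Complex.exp (((t ⬝ᵥ x - θ : ℝ) : ℂ) * Complex.I) =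
        Complex.exp (((t ⬝ᵥ x : ℝ) : ℂ) * Complex.I) * Complex.exp (-(θ * Complex.I)) := by
      intro x
      rw [← Complex.exp_add]
      push_cast
      ring_nf
    simp_rw [this]
    rw [integral_mul_const, ← coordCharFun, hz, ← Complex.exp_add, add_neg_cancel, Complex.exp_zero]
  have hcont : Continuous fun x : Fin d → ℝ => t ⬝ᵥ x := continuous_dotProduct_right t
  have hci : Integrable (fun x => Complex.exp (((t ⬝ᵥ x - θ : ℝ) : ℂ) * Complex.I)) ν :=
    (integrable_const (1 : ℝ)).mono (Continuous.aestronglyMeasurable (by fun_prop))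
      (.of_forall fun x => by rw [Complex.norm_exp_ofReal_mul_I]; simp)
  have hre : ∫ x, Real.cos (t ⬝ᵥ x - θ) ∂ν = 1 := by
    have := integral_re hci
    simp only [RCLike.re_to_complex, Complex.exp_ofReal_mul_I_re] at this
    rw [this, hint, Complex.one_re]
  have hcosi : Integrable (fun x => Real.cos (t ⬝ᵥ x - θ)) ν := by
    simpa only [RCLike.re_to_complex, Complex.exp_ofReal_mul_I_re] using hci.re
  have hzero : ∫ x, (1 - Real.cos (t ⬝ᵥ x - θ)) ∂ν = 0 := by
    rw [integral_sub (integrable_const _) hcosi, hre]; simp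
  rw [integral_eq_zero_iff_of_nonneg (fun x => sub_nonneg.2 (Real.cos_le_one _))
    ((integrable_const _).sub hcosi)] at hzero
  refine ⟨θ, hzero.mono fun x hx => ?_⟩
  obtain ⟨k, hk⟩ := (Real.cos_eq_one_iff _).1 (sub_eq_zero.1 hx).symm
  exact ⟨k, by linarith⟩

lemma ae_eventually_dotProduct_eq_zero (ν : Measure (Fin d → ℝ)) [IsProbabilityMeasure ν]
    {t : ℕ → Fin d → ℝ} (ht : Tendsto t atTop (𝓝 0)) (h : ∀ n, ‖coordCharFun ν (t n)‖ = 1) :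
    ∃ y : Fin d → ℝ, ∀ᵐ x ∂ν, ∀ᶠ n in atTop, t n ⬝ᵥ (x - y) = 0 := by
  choose θ hθ using fun n => ae_dotProduct_mem_of_norm_coordCharFun_eq_one ν (h n)
  have hall := ae_all_iff.2 hθ
  obtain ⟨y, hy⟩ := hall.exists
  refine ⟨y, hall.mono fun x hx => ?_⟩
  have hlim : Tendsto (fun n => t n ⬝ᵥ (x - y)) atTop (𝓝 0) := by
    have := ((continuous_dotProduct_left (x - y)).tendsto 0).comp ht
    rwa [zero_dotProduct] at this
  have hpi := Real.pi_pos
  filter_upwards [hlim.eventually (Metric.ball_mem_nhds 0 (by positivity : 0 < 2 * Real.pi))]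
    with n hn
  obtain ⟨k, hk⟩ := hx n
  obtain ⟨l, hl⟩ := hy n
  have hkl : t n ⬝ᵥ (x - y) = ((k - l : ℤ) : ℝ) * (2 * Real.pi) := by
    rw [dotProduct_sub, hk, hl]; push_cast; ring
  rw [hkl, dist_zero_right, norm_mul,
    Real.norm_of_nonneg (by positivity : 0 ≤ 2 * Real.pi)] at hn
  have h1 : |((k - l : ℤ) : ℝ)| < 1 := by
    rw [← Real.norm_eq_abs]
    by_contra! hc
    nlinarith
  have h2 : k - l = 0 := Int.abs_lt_one_iff.1 (by exact_mod_cast h1)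
  rw [hkl, h2]
  simp

lemma exists_eq_dirac_of_norm_coordCharFun_eq_one (ν : Measure (Fin d → ℝ))
    [IsProbabilityMeasure ν] (h : ∀ᶠ t in 𝓝 (0 : Fin d → ℝ), ‖coordCharFun ν t‖ = 1) :
    ∃ a, ν = Measure.dirac a := by
  have hcoord (i : Fin d) : ∃ c : ℝ, ∀ᵐ x ∂ν, x i = c := by
    have hlim : Tendsto (fun n : ℕ => (1 / ((n : ℝ) + 1)) • (Pi.single i 1 : Fin d → ℝ))
        atTop (𝓝 0) := by
      simpa using (tendsto_one_div_add_atTop_nhds_zero_nat (𝕜 := ℝ)).smul_const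
        (Pi.single i 1 : Fin d → ℝ)
    obtain ⟨N, hN⟩ := eventually_atTop.1 (hlim.eventually h)
    obtain ⟨y, hy⟩ := ae_eventually_dotProduct_eq_zero ν (hlim.comp (tendsto_add_atTop_nat N))
      (fun n => hN _ (Nat.le_add_left N n))
    refine ⟨y i, hy.mono fun x hx => ?_⟩
    obtain ⟨n, hn⟩ := hx.exists
    simp only [Function.comp, smul_dotProduct, single_dotProduct, one_mul, Pi.sub_apply,
      smul_eq_mul, mul_eq_zero, sub_eq_zero] at hn
    exact hn.resolve_left (by positivity)
  choose a ha using hcoord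
  refine ⟨a, ?_⟩
  have hae : (id : (Fin d → ℝ) → _) =ᵐ[ν] fun _ => a :=
    (ae_all_iff.2 ha).mono fun x hx => funext hx
  simpa using Measure.map_congr hae

lemma IsFull.exists_norm_coordCharFun_lt_one {μ : Measure (Fin d → ℝ)} [IsProbabilityMeasure μ]
    (hμ : IsFull μ) :
    ∃ r > 0, ∀ t : Fin d → ℝ, t ≠ 0 → ‖t‖ ≤ r → ‖coordCharFun μ t‖ < 1 := by
  by_contra! hcon
  choose t ht0 htn ht1 using fun n : ℕ =>
    hcon (1 / ((n : ℝ) + 1)) (by positivity)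
  have hlim : Tendsto t atTop (𝓝 0) :=
    squeeze_zero_norm htn tendsto_one_div_add_atTop_nhds_zero_nat
  obtain ⟨y, hy⟩ := ae_eventually_dotProduct_eq_zero μ hlim
    fun n => le_antisymm (norm_coordCharFun_le_one μ _) (ht1 n)
  obtain ⟨u, hu, φ, hφ, hφu⟩ := (isCompact_sphere (0 : Fin d → ℝ) 1).tendsto_subseq
    (x := fun n => ‖t n‖⁻¹ • t n) fun n => by
      simp [norm_smul, norm_ne_zero_iff.2 (ht0 n)]
  have hu0 : u ≠ 0 := by
    rintro rfl
    simp at hu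
  have hker : ∀ᵐ x ∂μ, u ⬝ᵥ (x - y) = 0 := hy.mono fun x hx => by
    refine tendsto_nhds_unique (((continuous_dotProduct_left (x - y)).tendsto u).comp hφu) ?_
    refine tendsto_const_nhds.congr' ?_
    filter_upwards [hφ.tendsto_atTop.eventually hx] with n hn
    simp only [Function.comp, smul_dotProduct, hn, smul_zero]
  let L : Submodule ℝ (Fin d → ℝ) := LinearMap.ker (dotProductBilin ℝ ℝ u)
  have hL : L ≠ ⊤ := by
    intro h
    have : u ∈ L := h ▸ Submodule.mem_top
    exact hu0 (dotProduct_self_eq_zero.1 (by simpa [L] using this))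
  have hlt := hμ y L hL
  have hone : μ {x | x - y ∈ L} = 1 := by
    rw [measure_congr (eventuallyEq_univ.2 ?_), measure_univ]
    exact hker
  exact hlt.ne hone

end CharFun

section Decomposability

variable {d : ℕ}

lemma isTightMeasureSet_cofactors {μ : Measure (Fin d → ℝ)} [IsProbabilityMeasure μ]
    {A : Matrix (Fin d) (Fin d) ℝ} {B : ℕ → Matrix (Fin d) (Fin d) ℝ}
    (hB : Tendsto B atTop (𝓝 A)) {ν : ℕ → Measure (Fin d → ℝ)}
    (hν : ∀ n, IsProbabilityMeasure (ν n)) (h : ∀ n, μ = mconv (μ.map (B n).mulVec) (ν n)) :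
    IsTightMeasureSet (Set.range ν) := by
  rw [isTightMeasureSet_iff_exists_isCompact_measure_compl_le]
  intro ε hε
  have hμ := isTightMeasureSet_iff_exists_isCompact_measure_compl_le.1
    (isTightMeasureSet_singleton (μ := μ))
  obtain ⟨K, hK, hKμ⟩ := hμ (ε / 2) (ENNReal.half_pos hε.ne')
  obtain ⟨M, hM, hMμ⟩ := hμ (1 / 2) (by norm_num)
  set Q : Set (Fin d → ℝ) :=
    (fun p : Matrix (Fin d) (Fin d) ℝ × (Fin d → ℝ) => p.1 *ᵥ p.2) ''
      (insert A (Set.range B) ×ˢ M)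
  have hQ : IsCompact Q := (hB.isCompact_insert_range.prod hM).image
    (Continuous.matrix_mulVec continuous_fst continuous_snd)
  have hMhalf : 1 / 2 ≤ μ M := by
    have h1 : 1 ≤ μ M + 1 / 2 := by
      calc (1 : ENNReal) = μ Set.univ := measure_univ.symm
        _ ≤ μ M + μ Mᶜ := by rw [← Set.union_compl_self M]; exact measure_union_le _ _
        _ ≤ μ M + 1 / 2 := by gcongr; exact hMμ μ rfl
    have h2 : (1 / 2 : ENNReal) + 1 / 2 ≤ μ M + 1 / 2 := by rwa [ENNReal.add_halves]
    exact (ENNReal.add_le_add_iff_right (by norm_num)).1 h2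
  refine ⟨(fun p : (Fin d → ℝ) × (Fin d → ℝ) => p.1 - p.2) '' (K ×ˢ Q),
    (hK.prod hQ).image (by fun_prop), ?_⟩
  rintro _ ⟨n, rfl⟩
  set T := (fun p : (Fin d → ℝ) × (Fin d → ℝ) => p.1 - p.2) '' (K ×ˢ Q)
  have := hν n
  have hBm : Measurable (B n).mulVec := (continuous_mulVec (B n)).measurable
  have : IsProbabilityMeasure (μ.map (B n).mulVec) :=
    Measure.isProbabilityMeasure_map hBm.aemeasurable
  have hQhalf : 1 / 2 ≤ μ.map (B n).mulVec Q := by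
    rw [Measure.map_apply hBm hQ.measurableSet]
    refine hMhalf.trans (measure_mono fun x hx => ?_)
    exact ⟨(B n, x), ⟨Set.mem_insert_of_mem _ ⟨n, rfl⟩, hx⟩, rfl⟩
  have hprod : μ.map (B n).mulVec Q * ν n Tᶜ ≤ μ Kᶜ := by
    conv_rhs => rw [h n, mconv, Measure.map_apply (by fun_prop) hK.measurableSet.compl]
    rw [← Measure.prod_prod]
    refine measure_mono ?_
    rintro ⟨x, y⟩ ⟨hx, hy⟩ hxy
    exact hy ⟨(x + y, x), ⟨hxy, hx⟩, by simp⟩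
  have hle : 1 / 2 * ν n Tᶜ ≤ ε / 2 :=
    (mul_le_mul_left hQhalf _).trans (hprod.trans (hKμ μ rfl))
  calc ν n Tᶜ = 2 * (1 / 2 * ν n Tᶜ) := by
        rw [← mul_assoc, one_div, ENNReal.mul_inv_cancel (by norm_num) (by norm_num), one_mul]
    _ ≤ 2 * (ε / 2) := by gcongr
    _ = ε := ENNReal.mul_div_cancel (by norm_num) (by norm_num)

lemma isClosed_urbanikD (μ : Measure (Fin d → ℝ)) [IsProbabilityMeasure μ] :
    IsClosed (UrbanikD μ) := by
  have : FirstCountableTopology (Matrix (Fin d) (Fin d) ℝ) :=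
    inferInstanceAs (FirstCountableTopology (Fin d → Fin d → ℝ))
  refine IsSeqClosed.isClosed fun B A hBD hB => ?_
  choose ν hνp hν using hBD
  have htight := isTightMeasureSet_cofactors hB hνp hν
  let P : ℕ → ProbabilityMeasure (Fin d → ℝ) := fun n => ⟨ν n, hνp n⟩
  have hcomp : IsCompact (closure (Set.range P)) := by
    refine isCompact_closure_of_isTightMeasureSet (htight.subset ?_)
    rintro _ ⟨_, ⟨n, rfl⟩, rfl⟩
    exact ⟨n, rfl⟩
  obtain ⟨ρ, -, hρ⟩ := hcomp.ultrafilter_le_nhds ((hyperfilter ℕ).map P)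
    (le_principal_iff.2 (mem_map.2 (univ_mem' fun n => subset_closure ⟨n, rfl⟩)))
  have hPρ : Tendsto P (hyperfilter ℕ) (𝓝 ρ) := hρ
  have hB' : Tendsto B (hyperfilter ℕ) (𝓝 A) :=
    hB.mono_left (Nat.cofinite_eq_atTop ▸ hyperfilter_le_cofinite)
  have hmap (D : Matrix (Fin d) (Fin d) ℝ) : IsProbabilityMeasure (μ.map D.mulVec) :=
    Measure.isProbabilityMeasure_map (continuous_mulVec D).aemeasurable
  refine ⟨ρ, inferInstance, ext_of_coordCharFun fun t => ?_⟩
  rw [coordCharFun_mconv, coordCharFun_map_mulVec]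
  have hνlim : Tendsto (fun n => coordCharFun (ν n) t) (hyperfilter ℕ)
      (𝓝 (coordCharFun (ρ : Measure (Fin d → ℝ)) t)) := by
    rw [ProbabilityMeasure.tendsto_iff_forall_integral_rclike_tendsto ℂ] at hPρ
    exact hPρ (BoundedContinuousFunction.ofNormedAddCommGroup _ (continuous_exp_dotProduct t) 1
      fun x => (Complex.norm_exp_ofReal_mul_I _).le)
  have hμlim : Tendsto (fun n => coordCharFun μ ((B n)ᵀ *ᵥ t)) (hyperfilter ℕ)
      (𝓝 (coordCharFun μ (Aᵀ *ᵥ t))) := by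
    have hc : Continuous fun D : Matrix (Fin d) (Fin d) ℝ => coordCharFun μ (Dᵀ *ᵥ t) :=
      (continuous_coordCharFun μ).comp
        (Continuous.matrix_mulVec continuous_id.matrix_transpose continuous_const)
    exact (hc.tendsto A).comp hB'
  refine tendsto_nhds_unique ?_ (hμlim.mul hνlim)
  refine tendsto_const_nhds.congr fun n => ?_
  have := hνp n
  rw [← coordCharFun_map_mulVec, ← coordCharFun_mconv, ← hν n]

lemma norm_coordCharFun_le_of_mem_urbanikD {μ : Measure (Fin d → ℝ)} [IsProbabilityMeasure μ]
    {A : Matrix (Fin d) (Fin d) ℝ} (hA : A ∈ UrbanikD μ) (t : Fin d → ℝ) :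
    ‖coordCharFun μ t‖ ≤ ‖coordCharFun μ (Aᵀ *ᵥ t)‖ := by
  obtain ⟨ν, hν, h⟩ := hA
  have : IsProbabilityMeasure (μ.map A.mulVec) :=
    Measure.isProbabilityMeasure_map (continuous_mulVec A).aemeasurable
  conv_lhs => rw [h, coordCharFun_mconv, coordCharFun_map_mulVec, norm_mul]
  exact mul_le_of_le_one_right (norm_nonneg _) (norm_coordCharFun_le_one ν t)

/-- A continuous function with a strict local maximum at the origin has a bounded open
neighbourhood of the origin stable under every linear map along which the function does not
decrease. -/
lemma exists_bounded_stable_nhds {f : (Fin d → ℝ) → ℝ} (hf : Continuous f) {r : ℝ} (hr : 0 < r)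
    (hlt : ∀ t, t ≠ 0 → ‖t‖ ≤ r → f t < f 0) :
    ∃ V : Set (Fin d → ℝ), IsOpen V ∧ 0 ∈ V ∧ V ⊆ Metric.ball 0 r ∧
      ∀ B : Matrix (Fin d) (Fin d) ℝ, (∀ t, f t ≤ f (B *ᵥ t)) → Set.MapsTo B.mulVec V V := by
  obtain ⟨c, hc, hcs⟩ : ∃ c < f 0, ∀ t ∈ Metric.sphere (0 : Fin d → ℝ) r, f t ≤ c := by
    rcases (Metric.sphere (0 : Fin d → ℝ) r).eq_empty_or_nonempty with he | hne
    · exact ⟨f 0 - 1, by linarith, by simp [he]⟩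
    · obtain ⟨s, hs, hmax⟩ := (isCompact_sphere (0 : Fin d → ℝ) r).exists_isMaxOn hne
        hf.continuousOn
      have hsr : ‖s‖ = r := by simpa using hs
      exact ⟨f s, hlt s (norm_ne_zero_iff.1 (hsr ▸ hr.ne')) hsr.le, fun t ht => hmax ht⟩
  have hU : IsOpen {t | c < f t} := isOpen_lt continuous_const hf
  set V := connectedComponentIn {t | c < f t} 0
  have h0V : (0 : Fin d → ℝ) ∈ V := mem_connectedComponentIn hc
  have hVU : V ⊆ {t | c < f t} := connectedComponentIn_subset _ _
  have hVc : IsPreconnected V := isPreconnected_connectedComponentIn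
  refine ⟨V, hU.connectedComponentIn, h0V, fun t ht => ?_, fun B hB => ?_⟩
  · rw [mem_ball_zero_iff]
    by_contra! hrt
    obtain ⟨s, hsV, hs⟩ := (hVc.image norm continuous_norm.continuousOn).Icc_subset
      ⟨0, h0V, norm_zero⟩ ⟨t, ht, rfl⟩ ⟨hr.le, hrt⟩
    exact (hVU hsV).not_ge (hcs s (by simpa using hs))
  · rw [Set.mapsTo_iff_image_subset]
    refine (hVc.image _ (continuous_mulVec B).continuousOn).subset_connectedComponentIn
      ⟨0, h0V, mulVec_zero B⟩ ?_
    rintro _ ⟨t, ht, rfl⟩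
    exact (hVU ht).trans_le (hB t)

lemma abs_det_eq_one_of_image_eq {V : Set (Fin d → ℝ)} (hV : IsOpen V) (hne : V.Nonempty)
    (hfin : volume V ≠ ⊤) {B : Matrix (Fin d) (Fin d) ℝ} (h : B.mulVec '' V = V) :
    |B.det| = 1 := by
  have himg := Measure.addHaar_image_linearMap volume (Matrix.toLin' B) V
  rw [LinearMap.det_toLin', show (Matrix.toLin' B : (Fin d → ℝ) → _) '' V = V from h] at himg
  have h0 : volume V ≠ 0 := (hV.measure_pos volume hne).ne'
  have h1 : ENNReal.ofReal |B.det| = 1 :=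
    (ENNReal.mul_left_inj h0 hfin).1 (by rw [one_mul]; exact himg.symm)
  simpa using h1

lemma eqOn_comp_mulVec_of_le {f : (Fin d → ℝ) → ℝ} (hf : Continuous f) (hf0 : ∀ t, 0 ≤ f t)
    {V : Set (Fin d → ℝ)} (hV : IsOpen V) (hVb : Bornology.IsBounded V)
    {B : Matrix (Fin d) (Fin d) ℝ} (hB : |B.det| = 1) (hBV : Set.MapsTo B.mulVec V V)
    (hle : ∀ t, f t ≤ f (B *ᵥ t)) : Set.EqOn f (fun t => f (B *ᵥ t)) V := by
  have hint (g : (Fin d → ℝ) → ℝ) (hg : Continuous g) : IntegrableOn g V :=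
    (hg.continuousOn.integrableOn_compact hVb.isCompact_closure).mono_set subset_closure
  have hfB : Continuous fun t => f (B *ᵥ t) := hf.comp (continuous_mulVec B)
  have hdet : B.det ≠ 0 := by
    intro h
    simp [h] at hB
  have hinj : Function.Injective B.mulVec :=
    Matrix.mulVec_injective_iff_isUnit.2 ((Matrix.isUnit_iff_isUnit_det B).2 hdet.isUnit)
  have hcv : ∫ t in B.mulVec '' V, f t = ∫ t in V, f (B *ᵥ t) := by
    rw [integral_image_eq_integral_abs_det_fderiv_smul volume hV.measurableSet
      (f := B.mulVec) (f' := fun _ => (Matrix.toLin' B).toContinuousLinearMap)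
      (fun t _ => (Matrix.toLin' B).toContinuousLinearMap.hasFDerivWithinAt) hinj.injOn]
    have : (Matrix.toLin' B).toContinuousLinearMap.det = B.det := by
      simp [ContinuousLinearMap.det]
    simp only [this, hB, one_smul]
  have hmono : ∫ t in V, f (B *ᵥ t) ≤ ∫ t in V, f t := by
    rw [← hcv]
    exact setIntegral_mono_set (hint f hf) (.of_forall hf0)
      (Set.mapsTo_iff_image_subset.1 hBV).eventuallyLE
  have hzero : ∫ t in V, (f (B *ᵥ t) - f t) = 0 := by
    refine le_antisymm ?_ (integral_nonneg fun t => sub_nonneg.2 (hle t))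
    rw [integral_sub (hint _ hfB) (hint f hf)]
    linarith
  rw [integral_eq_zero_iff_of_nonneg (fun t => sub_nonneg.2 (hle t))
    ((hint _ hfB).sub (hint f hf))] at hzero
  exact Measure.eqOn_open_of_ae_eq (μ := volume)
    (hzero.mono fun t ht => (sub_eq_zero.1 ht).symm) hV hf.continuousOn hfB.continuousOn

lemma IsFull.abs_det_eq_one_of_mem_symmA {μ : Measure (Fin d → ℝ)} [IsProbabilityMeasure μ]
    (hμ : IsFull μ) {A : Matrix (Fin d) (Fin d) ℝ} (hA : A ∈ SymmA μ) : |A.det| = 1 := by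
  obtain ⟨a, ha⟩ := hA
  have hinv (t : Fin d → ℝ) : ‖coordCharFun μ (Aᵀ *ᵥ t)‖ = ‖coordCharFun μ t‖ := by
    conv_rhs => rw [ha, coordCharFun_map_affine, norm_mul, Complex.norm_exp_ofReal_mul_I, mul_one]
  obtain ⟨r, hr, hlt⟩ := hμ.exists_norm_coordCharFun_lt_one
  have h0 : ‖coordCharFun μ 0‖ = 1 := by simp [coordCharFun_zero]
  have hdet : IsUnit Aᵀ.det := by
    rw [isUnit_iff_ne_zero]
    intro hd
    obtain ⟨v, hv, hAv⟩ := Matrix.exists_mulVec_eq_zero_iff.2 hd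
    have hvn := norm_ne_zero_iff.2 hv
    have := hlt ((r / ‖v‖) • v) (smul_ne_zero (div_ne_zero hr.ne' hvn) hv)
      (by rw [norm_smul, norm_div, norm_norm, div_mul_cancel₀ _ hvn, Real.norm_of_nonneg hr.le])
    rw [← hinv, mulVec_smul, hAv, smul_zero, h0] at this
    exact this.false
  obtain ⟨V, hVo, h0V, hVr, hstable⟩ := exists_bounded_stable_nhds
    (continuous_coordCharFun μ).norm hr (fun t ht htr => h0.symm ▸ hlt t ht htr)
  have hcancel (t : Fin d → ℝ) : Aᵀ *ᵥ ((Aᵀ)⁻¹ *ᵥ t) = t := by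
    rw [mulVec_mulVec, Matrix.mul_nonsing_inv _ hdet, one_mulVec]
  have himg : (Aᵀ).mulVec '' V = V := by
    refine (Set.mapsTo_iff_image_subset.1 (hstable _ fun t => (hinv t).ge)).antisymm fun t ht => ?_
    exact ⟨(Aᵀ)⁻¹ *ᵥ t, hstable _ (fun s => by rw [← hinv ((Aᵀ)⁻¹ *ᵥ s), hcancel]) ht, hcancel t⟩
  have hfin : volume V ≠ ⊤ := (Metric.isBounded_ball.subset hVr).measure_lt_top.ne
  simpa using abs_det_eq_one_of_image_eq hVo ⟨0, h0V⟩ hfin himg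

lemma IsFull.mem_symmA_of_abs_det_eq_one {μ : Measure (Fin d → ℝ)} [IsProbabilityMeasure μ]
    (hμ : IsFull μ) {A : Matrix (Fin d) (Fin d) ℝ} (hA : A ∈ UrbanikD μ) (hdet : |A.det| = 1) :
    A ∈ SymmA μ := by
  obtain ⟨r, hr, hlt⟩ := hμ.exists_norm_coordCharFun_lt_one
  have h0 : ‖coordCharFun μ 0‖ = 1 := by simp [coordCharFun_zero]
  have hcont := (continuous_coordCharFun μ).norm
  obtain ⟨V, hVo, h0V, hVr, hstable⟩ := exists_bounded_stable_nhds hcont hr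
    (fun t ht htr => h0.symm ▸ hlt t ht htr)
  have hle := norm_coordCharFun_le_of_mem_urbanikD hA
  have heq := eqOn_comp_mulVec_of_le hcont (fun t => norm_nonneg _) hVo
    (Metric.isBounded_ball.subset hVr) (B := Aᵀ) (by rwa [det_transpose]) (hstable _ hle) hle
  obtain ⟨ν, hν, h⟩ := hA
  have : IsProbabilityMeasure (μ.map A.mulVec) :=
    Measure.isProbabilityMeasure_map (continuous_mulVec A).aemeasurable
  have hpos : ∀ᶠ t in 𝓝 (0 : Fin d → ℝ), 0 < ‖coordCharFun μ t‖ :=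
    (hcont.tendsto 0).eventually (lt_mem_nhds (by rw [h0]; exact one_pos))
  obtain ⟨a, rfl⟩ := exists_eq_dirac_of_norm_coordCharFun_eq_one ν (by
    filter_upwards [hpos, hVo.mem_nhds h0V] with t ht htV
    have hprod : ‖coordCharFun μ t‖ = ‖coordCharFun μ t‖ * ‖coordCharFun ν t‖ := by
      conv_lhs => rw [h, coordCharFun_mconv, coordCharFun_map_mulVec, norm_mul]
      exact congrArg (· * _) (heq htV).symm
    exact (mul_eq_left₀ ht.ne').1 hprod.symm)
  refine ⟨a, h.trans ?_⟩
  rw [mconv, Measure.prod_dirac, Measure.map_map (by fun_prop) (by fun_prop),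
    Measure.map_map (by fun_prop) (continuous_mulVec A).measurable]
  rfl

end Decomposability

/-- **Step 2 of Lemma 5.** Let `μ` be full, `(C_w)_{w ∈ ℚ≥0} ⊆ D(μ)` invertible with
`C_0 = I`, `C_{w+u} = C_w C_u` and `det C_w = e^{-qw}` for a positive integer `q`, and
let `S` be the closure of `{C_w}`. Then for `A ∈ S`: `A ∈ A(μ) ↔ det A = 1`;
i.e. the kernel of `A ↦ log det A` on `S` is `S ∩ A(μ)`. -/
theorem kernel_of_logdet_on_closure
    {d : ℕ} (μ : Measure (Fin d → ℝ)) [IsProbabilityMeasure μ] (hfull : IsFull μ)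
    (q : ℕ) (hq : 0 < q) (C : ℚ≥0 → Matrix (Fin d) (Fin d) ℝ)
    (hD : ∀ w, C w ∈ UrbanikD μ) (hinv : ∀ w, IsUnit (C w)) (h0 : C 0 = 1)
    (hadd : ∀ w u, C (w + u) = C w * C u)
    (hdet : ∀ w, (C w).det = Real.exp (-(q * (w : ℝ)))) :
    ∀ A ∈ closure {A : Matrix (Fin d) (Fin d) ℝ | ∃ w, A = C w},
      (A ∈ SymmA μ ↔ A.det = 1) := by
  intro A hA
  have hAD : A ∈ UrbanikD μ :=
    closure_minimal (by rintro _ ⟨w, rfl⟩; exact hD w) (isClosed_urbanikD μ) hA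
  have hdet0 : 0 ≤ A.det := by
    have hcl : IsClosed {D : Matrix (Fin d) (Fin d) ℝ | 0 ≤ D.det} :=
      isClosed_le continuous_const continuous_id.matrix_det
    refine closure_minimal ?_ hcl hA
    rintro _ ⟨w, rfl⟩
    exact (Real.exp_pos _).le.trans_eq (hdet w).symm
  refine ⟨fun h => ?_, fun h => hfull.mem_symmA_of_abs_det_eq_one hAD (by simp [h])⟩
  simpa [abs_of_nonneg hdet0] using hfull.abs_det_eq_one_of_mem_symmA h
end
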